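/- Let g be a post-Lie algebra over a field of characteristic zero with post-symmetric brace operations {T_n}, regarded as a single operation T(X; y) on finite lists X of elements of g (with T((); y) = y). Then for all lists X = (x_1, …, x_n) and Y = (y_1, …, y_m) of elements of g and all z ∈ g: T(X; T(Y; z)) = Σ_f T( X_{f^{-1}(0)} followed by the m elements T(X_{f^{-1}(1)}; y_1), …, T(X_{f^{-1}(m)}; y_m) ; z), where the sum ranges over all functions f : {1, …, n} → {0, 1, …, m}, and X_S denotes the sublist of X consisting of the entries x_j with j ∈ S taken in increasing order of j (with X_∅ the empty list). -/

import Mathlib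

/-- The post-symmetric brace operations of a post-Lie algebra, as a single operation on
lists: `brace t [] y = y`, `brace t [x] y = t x y`, and for `n ≥ 2`
`brace t (x :: X) y = t x (brace t X y) - ∑ₖ brace t (X with xₖ replaced by t x xₖ) y`. -/
def brace {K : Type*} [Field K] {g : Type*} [AddCommGroup g] [Module K g]
    (t : g →ₗ[K] g →ₗ[K] g) : List g → g → g
  | [], y => y
  | x :: X, y =>
      t x (brace t X y) -
        ∑ k ∈ Finset.range X.length, brace t (X.set k (t x (X.getD k 0))) y
  termination_by l _ => l.length
  decreasing_by
    all_goals (simp only [List.length_set, List.length_cons]; omega)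

/-- The sublist `X_S` of `X` consisting of the entries `xⱼ` with `f j = i`, taken in
increasing order of `j`. -/
def subl {g : Type*} (X : List g) (f : Fin X.length → ℕ) (i : ℕ) : List g :=
  ((List.finRange X.length).filter (fun j => f j = i)).map X.get

section Helpers

variable {K : Type*} [Field K] {g : Type*} [AddCommGroup g] [Module K g]

/-- Sum over all ways of letting `x` act on one entry of the list. -/
def dsum (t : g →ₗ[K] g →ₗ[K] g) (x : g) : (List g → g) → List g → g
  | _, [] => 0
  | H, a :: X => H (t x a :: X) + dsum t x (fun L => H (a :: L)) X

theorem dsum_eq (t : g →ₗ[K] g →ₗ[K] g) (x : g) (X : List g) : ∀ (H : List g → g),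
    ∑ k ∈ Finset.range X.length, H (X.set k (t x (X.getD k 0))) = dsum t x H X := by
  induction X with
  | nil => intro H; simp [dsum]
  | cons a X ih =>
    intro H
    rw [List.length_cons, Finset.sum_range_succ', dsum, ← ih, add_comm]
    simp

theorem brace_nil (t : g →ₗ[K] g →ₗ[K] g) (y : g) : brace t [] y = y := by
  rw [brace]

theorem brace_cons (t : g →ₗ[K] g →ₗ[K] g) (x : g) (X : List g) (y : g) :
    brace t (x :: X) y = t x (brace t X y) - dsum t x (fun L => brace t L y) X := by
  rw [brace, dsum_eq t x X (fun L => brace t L y)]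

theorem dsum_congr (t : g →ₗ[K] g →ₗ[K] g) (x : g) (X : List g) : ∀ (H H' : List g → g),
    (∀ L, L.length = X.length → H L = H' L) → dsum t x H X = dsum t x H' X := by
  induction X with
  | nil => intro H H' _; rfl
  | cons a X ih =>
    intro H H' h
    rw [dsum, dsum, h _ (by simp), ih _ _ (fun L hL => h _ (by simp [hL]))]

theorem dsum_append (t : g →ₗ[K] g →ₗ[K] g) (x : g) (U V : List g) : ∀ (H : List g → g),
    dsum t x H (U ++ V) = dsum t x (fun L => H (L ++ V)) U + dsum t x (fun L => H (U ++ L)) V := by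
  induction U with
  | nil => intro H; simp [dsum]
  | cons a X ih =>
    intro H
    rw [List.cons_append, dsum, dsum, ih]
    simp [add_assoc]

theorem dsum_add (t : g →ₗ[K] g →ₗ[K] g) (x : g) (X : List g) : ∀ (H H' : List g → g),
    dsum t x (fun L => H L + H' L) X = dsum t x H X + dsum t x H' X := by
  induction X with
  | nil => intro H H'; simp [dsum]
  | cons a X ih =>
    intro H H'
    rw [dsum, dsum, dsum, ih]
    abel

theorem dsum_hom (t : g →ₗ[K] g →ₗ[K] g) (x : g) (φ : g → g) (h0 : φ 0 = 0)
    (hφ : ∀ a b, φ (a + b) = φ a + φ b) (X : List g) : ∀ (H : List g → g),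
    φ (dsum t x H X) = dsum t x (fun L => φ (H L)) X := by
  induction X with
  | nil => intro H; simp [dsum, h0]
  | cons a X ih =>
    intro H
    rw [dsum, dsum, hφ, ih]

theorem dsum_left (t : g →ₗ[K] g →ₗ[K] g) (a b : g) (X : List g) : ∀ (H : List g → g),
    (∀ U V c d, U.length + V.length + 1 = X.length →
      H (U ++ (c + d) :: V) = H (U ++ c :: V) + H (U ++ d :: V)) →
    dsum t (a + b) H X = dsum t a H X + dsum t b H X := by
  induction X with
  | nil => intro H _; simp [dsum]
  | cons u X ih =>
    intro H h
    rw [dsum, dsum, dsum, ih _ (fun U V c d hl => h (u :: U) V c d (by simp; omega))]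
    have := h [] X (t a u) (t b u) (by simp)
    simp only [List.nil_append] at this
    rw [map_add, LinearMap.add_apply, this]
    abel

theorem brace_add_aux (t : g →ₗ[K] g →ₗ[K] g) (z : g) (n : ℕ) : ∀ (U V : List g) (a b : g),
    U.length + V.length = n →
    brace t (U ++ (a + b) :: V) z = brace t (U ++ a :: V) z + brace t (U ++ b :: V) z := by
  induction n with
  | zero =>
    intro U V a b h
    have hU : U = [] := List.length_eq_zero_iff.1 (by omega)
    have hV : V = [] := List.length_eq_zero_iff.1 (by omega)
    subst hU hV
    simp [brace_cons, dsum]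
  | succ n ih =>
    intro U V a b h
    cases U with
    | nil =>
      simp only [List.nil_append, brace_cons]
      rw [dsum_left, map_add, LinearMap.add_apply]
      · abel
      · intro U W c d hl
        apply ih
        simp at h
        omega
    | cons u U =>
      simp only [List.length_cons] at h
      simp only [List.cons_append, brace_cons]
      rw [ih U V a b (by omega)]
      simp only [dsum_append, dsum]
      rw [dsum_congr t u U _ (fun L => brace t (L ++ a :: V) z + brace t (L ++ b :: V) z)
        (fun L hL => ih _ _ _ _ (by omega)),
        dsum_congr t u V (fun L => brace t (U ++ (a + b) :: L) z)
          (fun L => brace t (U ++ a :: L) z + brace t (U ++ b :: L) z)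
        (fun L hL => ih _ _ _ _ (by omega)), dsum_add, dsum_add, map_add, map_add,
        ih U V _ _ (by omega)]
      abel

theorem dsum_ofFn (t : g →ₗ[K] g →ₗ[K] g) (x : g) (m : ℕ) : ∀ (v : Fin m → g) (H : List g → g),
    dsum t x H (List.ofFn v) = ∑ i, H (List.ofFn (Function.update v i (t x (v i)))) := by
  induction m with
  | zero => intro v H; simp [dsum]
  | succ m ih =>
    intro v H
    rw [List.ofFn_succ, dsum, ih, Fin.sum_univ_succ]
    congr 1
    · simp [List.ofFn_succ]
    · apply Finset.sum_congr rfl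
      intro i _
      congr 1
      rw [List.ofFn_succ]
      congr 2
      funext j
      by_cases hj : j = i
      · subst hj; simp
      · simp [Function.update_of_ne, hj]

theorem ofFn_update_split {m : ℕ} (v : Fin m → g) (i : Fin m) :
    ∃ U V : List g, ∀ a, List.ofFn (Function.update v i a) = U ++ a :: V := by
  induction m with
  | zero => exact i.elim0
  | succ m ih =>
    refine Fin.cases ?_ (fun j => ?_) i
    · exact ⟨[], List.ofFn (fun k : Fin m => v k.succ), fun a => by simp [List.ofFn_succ]⟩
    · obtain ⟨U, V, h⟩ := ih (fun k => v k.succ) j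
      refine ⟨v 0 :: U, V, fun a => ?_⟩
      rw [List.ofFn_succ, List.cons_append, ← h a,
        Function.update_of_ne (Fin.succ_ne_zero j).symm]
      congr 2
      funext k
      by_cases hk : k = j
      · subst hk; simp
      · simp [hk]

/-- Sum over all ways of distributing the entries of a list over `ι` boxes. -/
def ssum {ι : Type} [Fintype ι] [DecidableEq ι] : List g → ((ι → List g) → g) → g
  | [], G => G (fun _ => [])
  | x :: X, G => ∑ i, ssum X (fun A => G (Function.update A i (x :: A i)))

theorem ssum_add {ι : Type} [Fintype ι] [DecidableEq ι] (X : List g) :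
    ∀ (G G' : (ι → List g) → g), ssum X (fun A => G A + G' A) = ssum X G + ssum X G' := by
  induction X with
  | nil => intro G G'; rfl
  | cons x X ih => intro G G'; simp [ssum, ih, Finset.sum_add_distrib]

theorem ssum_map {ι : Type} [Fintype ι] [DecidableEq ι] (φ : g →ₗ[K] g) (X : List g) :
    ∀ (G : (ι → List g) → g), φ (ssum X G) = ssum X (fun A => φ (G A)) := by
  induction X with
  | nil => intro G; rfl
  | cons x X ih => intro G; simp [ssum, ih]

theorem ssum_sum {ι : Type} [Fintype ι] [DecidableEq ι] {κ : Type} (s : Finset κ) (X : List g) :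
    ∀ (G : κ → (ι → List g) → g), ssum X (fun A => ∑ k ∈ s, G k A) = ∑ k ∈ s, ssum X (G k) := by
  induction X with
  | nil => intro G; rfl
  | cons x X ih =>
    intro G
    simp only [ssum, ih]
    rw [Finset.sum_comm]

theorem dsum_sum (t : g →ₗ[K] g →ₗ[K] g) (x : g) {κ : Type} (s : Finset κ) (X : List g) :
    ∀ (H : κ → List g → g),
    dsum t x (fun L => ∑ k ∈ s, H k L) X = ∑ k ∈ s, dsum t x (H k) X := by
  induction X with
  | nil => intro H; simp [dsum]
  | cons a X ih =>
    intro H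
    simp only [dsum, ih, Finset.sum_add_distrib]

theorem dsum_ssum (t : g →ₗ[K] g →ₗ[K] g) (x : g) {ι : Type} [Fintype ι] [DecidableEq ι]
    (X : List g) : ∀ (G : (ι → List g) → g),
    dsum t x (fun L => ssum L G) X =
      ssum X (fun A => ∑ i, dsum t x (fun L => G (Function.update A i L)) (A i)) := by
  induction X with
  | nil => intro G; simp [dsum, ssum]
  | cons a X ih =>
    intro G
    simp only [dsum, ssum]
    rw [dsum_sum, ← Finset.sum_add_distrib]
    apply Finset.sum_congr rfl
    intro i _
    rw [ih, ← ssum_add]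
    congr 1
    funext A
    rw [← Finset.add_sum_erase _ _ (Finset.mem_univ i),
      ← Finset.add_sum_erase (a := i) (Finset.univ) (fun j => dsum t x
        (fun L => G (Function.update (Function.update A i (a :: A i)) j L)) _) (Finset.mem_univ i)]
    simp only [Function.update_self, dsum, Function.update_idem]
    rw [add_assoc]
    congr 2
    apply Finset.sum_congr rfl
    intro j hj
    have hj : j ≠ i := (Finset.mem_erase.1 hj).1
    rw [Function.update_of_ne hj]
    congr 1
    funext L
    rw [Function.update_of_ne hj.symm, Function.update_comm hj]

theorem subl_cons (x : g) (X : List g) (f : Fin (x :: X).length → ℕ) (i : ℕ) :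
    subl (x :: X) f i = if f (0 : Fin (X.length + 1)) = i
      then x :: subl X (fun j => f (Fin.succ j)) i
      else subl X (fun j => f (Fin.succ j)) i := by
  unfold subl
  change List.map _ (List.filter _ (List.finRange (X.length + 1))) = _
  rw [List.finRange_succ, List.filter_cons]
  by_cases h : f (0 : Fin (X.length + 1)) = i
  · simp [h, List.filter_map, Function.comp_def]
  · simp [h, List.filter_map, Function.comp_def]

theorem sum_subl {m : ℕ} (X : List g) : ∀ (G : (Fin (m + 1) → List g) → g),
    ∑ f : Fin X.length → Fin (m + 1), G (fun i => subl X (fun j => (f j : ℕ)) (i : ℕ)) =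
      ssum X G := by
  induction X with
  | nil => 
    intro G
    simp [ssum, subl]
  | cons x X ih =>
    intro G
    rw [ssum]
    change ∑ f : Fin (X.length + 1) → Fin (m + 1), _ = _
    rw [← (Fin.consEquiv (fun _ => Fin (m + 1))).sum_comp, Fintype.sum_prod_type]
    apply Finset.sum_congr rfl
    intro i _
    rw [← ih]
    apply Finset.sum_congr rfl
    intro f _
    congr 1
    funext k
    rw [subl_cons]
    by_cases hk : k = i
    · subst hk
      simp [Fin.consEquiv]
    · have : ¬ (i : ℕ) = k := fun h => hk (Fin.ext h.symm)
      simp [Fin.consEquiv, hk, this]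

theorem brace_step (t : g →ₗ[K] g →ₗ[K] g) (x z : g) {m : ℕ} (Y : Fin m → g)
    (A : Fin (m + 1) → List g) (G : (Fin (m + 1) → List g) → g)
    (hG : ∀ A, G A = brace t (A 0 ++ List.ofFn (fun i : Fin m => brace t (A i.succ) (Y i))) z) :
    t x (G A) = ∑ i, G (Function.update A i (x :: A i)) +
      ∑ i, dsum t x (fun L => G (Function.update A i L)) (A i) := by
  have hU : ∀ (i : Fin m) (L : List g), G (Function.update A i.succ L) =
      brace t (A 0 ++ List.ofFn (Function.update (fun i : Fin m => brace t (A i.succ) (Y i)) i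
        (brace t L (Y i)))) z := by
    intro i L
    rw [hG]
    congr 2
    congr 1
    funext j
    by_cases hj : j = i
    · subst hj; simp
    · simp [hj]
  have h0 : ∀ (L : List g), G (Function.update A 0 L) =
      brace t (L ++ List.ofFn (fun i : Fin m => brace t (A i.succ) (Y i))) z := by
    intro L
    rw [hG]
    simp
  have hx : ∀ W y, t x (brace t W y) = brace t (x :: W) y + dsum t x (fun L => brace t L y) W := by
    intro W y
    rw [brace_cons]; abel
  rw [Fin.sum_univ_succ, Fin.sum_univ_succ]
  simp only [hU, h0]
  rw [hG, hx, dsum_append, dsum_ofFn]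
  have key : ∀ i : Fin m, brace t (A 0 ++ List.ofFn (Function.update
        (fun i : Fin m => brace t (A i.succ) (Y i)) i (t x (brace t (A i.succ) (Y i))))) z =
      brace t (A 0 ++ List.ofFn (Function.update
        (fun i : Fin m => brace t (A i.succ) (Y i)) i (brace t (x :: A i.succ) (Y i)))) z +
      dsum t x (fun L => brace t (A 0 ++ List.ofFn (Function.update
        (fun i : Fin m => brace t (A i.succ) (Y i)) i (brace t L (Y i)))) z) (A i.succ) := by
    intro i
    obtain ⟨U, V, hUV⟩ := ofFn_update_split (fun i : Fin m => brace t (A i.succ) (Y i)) i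
    simp only [hUV, hx]
    have hadd : ∀ a b, brace t (A 0 ++ (U ++ (a + b) :: V)) z =
        brace t (A 0 ++ (U ++ a :: V)) z + brace t (A 0 ++ (U ++ b :: V)) z := by
      intro a b
      have := brace_add_aux t z _ (A 0 ++ U) V a b rfl
      simpa only [List.append_assoc] using this
    rw [hadd]
    congr 1
    refine dsum_hom t x (fun a => brace t (A 0 ++ (U ++ a :: V)) z) ?_ hadd _ _
    have := hadd 0 0
    rw [add_zero] at this
    simpa using this
  simp only [key, Finset.sum_add_distrib, List.cons_append]
  abel

theorem brace_comp_aux (t : g →ₗ[K] g →ₗ[K] g) (z : g) (Y : List g)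
    (G : (Fin (Y.length + 1) → List g) → g)
    (hG : ∀ A, G A = brace t (A 0 ++ List.ofFn
      (fun i : Fin Y.length => brace t (A i.succ) (Y.get i))) z) (n : ℕ) :
    ∀ X : List g, X.length = n → brace t X (brace t Y z) = ssum X G := by
  induction n with
  | zero =>
    intro X h
    have hX : X = [] := List.length_eq_zero_iff.1 h
    subst hX
    simp only [ssum, hG, brace_nil, List.nil_append, List.ofFn_get]
  | succ n ih =>
    intro X h
    cases X with
    | nil => simp at h
    | cons x X =>
      have h' : X.length = n := by simpa using h
      rw [brace_cons, ih X h', dsum_congr t x X _ (fun L => ssum L G)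
        (fun L hL => ih L (by omega)), dsum_ssum, ssum_map, sub_eq_iff_eq_add, ssum, ← ssum_sum,
        ← ssum_add]
      congr 1
      funext A
      exact brace_step t x z Y.get A G hG

end Helpers

/-- The composition identity for post-symmetric braces:
`T(X; T(Y; z)) = Σ_f T(X_{f⁻¹(0)}, T(X_{f⁻¹(1)}; y₁), …, T(X_{f⁻¹(m)}; y_m); z)`,
where the sum runs over all maps `f : {1,…,n} → {0,1,…,m}`. -/
theorem brace_composition {K : Type*} [Field K] [CharZero K]
    {g : Type*} [LieRing g] [LieAlgebra K g] (t : g →ₗ[K] g →ₗ[K] g)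
    (h1 : ∀ z x y : g, t z ⁅x, y⁆ = ⁅t z x, y⁆ + ⁅x, t z y⁆)
    (h2 : ∀ x y z : g, t ⁅x, y⁆ z =
      (t x (t y z) - t (t x y) z) - (t y (t x z) - t (t y x) z))
    (X Y : List g) (z : g) :
    brace t X (brace t Y z) =
      ∑ f : Fin X.length → Fin (Y.length + 1),
        brace t
          (subl X (fun j => (f j : ℕ)) 0 ++
            (List.finRange Y.length).map
              (fun (i : Fin Y.length) => brace t (subl X (fun j => (f j : ℕ)) ((i : ℕ) + 1)) (Y.get i)))
          z := by
  rw [brace_comp_aux t z Y (fun A => brace t (A 0 ++ List.ofFn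
      (fun i : Fin Y.length => brace t (A i.succ) (Y.get i))) z) (fun _ => rfl) _ X rfl,
    ← sum_subl]
  simp only [List.ofFn_eq_map, Fin.val_succ, Fin.val_zero]
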